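/- Mertens' third theorem: ∏_{p ≤ x} (1 - 1/p) is asymptotic to e^{-γ} / ln x as x → ∞. -/

import Mathlib

/-!
The logarithm of `∏_{p ≤ x} (1 - 1/p)⁻¹` differs by `o(1)` from `∑_{n ≤ x} Λ(n) / (n log n)`: the
difference is a sum over `p ≤ x` of tails `∑_{p ^ k > x} 1 / (k p ^ k) = O(1 / p ^ 2)`, each tending
to `0`, so dominated convergence applies. Chebyshev's bound and `log N! = ∑_{n ≤ N} Λ(n) ⌊N / n⌋`
give `∑_{n ≤ N} Λ(n) / n = log N + O(1)`, and by partial summation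
`∑_{n ≤ N} Λ(n) / (n log n) = log log N + C + o(1)` for some constant `C`.

To identify `C`, compare this sum with the harmonic sum `∑_{n ≤ t} 1 / n = log t + γ + o(1)` at
`t = log N`, so that the two differ by `C - γ + o(1)`. An Abelian theorem for general Dirichlet
series transfers this limit to `∑ Λ(n) / (n ^ (1 + s) log n) - ∑ e ^ (-s n) / n` as `s → 0⁺`. The
latter is `log ζ(1 + s) + log (1 - e ^ (-s))`, which tends to `0` because `ζ` has a simple pole of
residue `1` at `1`. Hence `C = γ`.
-/

open Filter

section

open Asymptotics Finset MeasureTheory Topology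
open Real (exp log)
open scoped ArithmeticFunction.vonMangoldt

lemma sum_Ioc_log_eq_log_factorial (N : ℕ) : ∑ n ∈ Ioc 0 N, log n = log N.factorial := by
  induction N with
  | zero => simp
  | succ N ih =>
    rw [sum_Ioc_succ_top N.zero_le, ih, Nat.factorial_succ, Nat.cast_mul, add_comm,
      Real.log_mul (Nat.cast_ne_zero.mpr N.succ_ne_zero) (mod_cast N.factorial_ne_zero)]

lemma log_factorial_eq_sum_vonMangoldt (N : ℕ) :
    log N.factorial = ∑ n ∈ Ioc 0 N, Λ n * (N / n : ℕ) := by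
  rw [← ArithmeticFunction.sum_Ioc_mul_zeta_eq_sum, ArithmeticFunction.vonMangoldt_mul_zeta,
    ← sum_Ioc_log_eq_log_factorial]
  rfl

lemma mul_log_sub_self_le_log_factorial (N : ℕ) : N * log N - N ≤ log N.factorial := by
  rcases N.eq_zero_or_pos with rfl | hN
  · simp
  have hlog : 0 ≤ log N := Real.log_natCast_nonneg N
  have htwo_pi : 0 ≤ log (2 * Real.pi) := Real.log_nonneg (by linarith [Real.pi_gt_three])
  linarith [Stirling.le_log_factorial_stirling hN.ne']

lemma log_factorial_le_mul_log (N : ℕ) : log N.factorial ≤ N * log N := by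
  rw [← Real.log_pow]
  exact Real.log_le_log (mod_cast N.factorial_pos) (mod_cast N.factorial_le_pow)

lemma log_factorial_le_mul_sum_vonMangoldt_div (N : ℕ) :
    log N.factorial ≤ N * ∑ n ∈ Ioc 0 N, Λ n / n := by
  rw [log_factorial_eq_sum_vonMangoldt, mul_sum]
  refine sum_le_sum fun n _ => ?_
  calc Λ n * (N / n : ℕ) ≤ Λ n * (N / n : ℝ) :=
        mul_le_mul_of_nonneg_left Nat.cast_div_le ArithmeticFunction.vonMangoldt_nonneg
    _ = N * (Λ n / n) := by ring

lemma mul_sum_vonMangoldt_div_sub_psi_le_log_factorial (N : ℕ) :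
    N * ∑ n ∈ Ioc 0 N, Λ n / n - Chebyshev.psi N ≤ log N.factorial := by
  rw [log_factorial_eq_sum_vonMangoldt, mul_sum, Chebyshev.psi, Nat.floor_natCast,
    ← sum_sub_distrib]
  refine sum_le_sum fun n _ => ?_
  calc N * (Λ n / n) - Λ n = Λ n * (N / n - 1 : ℝ) := by ring
    _ ≤ Λ n * (N / n : ℕ) := by
        refine mul_le_mul_of_nonneg_left ?_ ArithmeticFunction.vonMangoldt_nonneg
        rw [← Nat.floor_div_eq_div (K := ℝ)]
        exact (Nat.sub_one_lt_floor _).le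

lemma abs_sum_vonMangoldt_div_sub_log_le (N : ℕ) :
    |∑ n ∈ Ioc 0 N, Λ n / n - log N| ≤ log 4 + 4 := by
  have hlog_four : 0 ≤ log 4 := Real.log_nonneg (by norm_num)
  rcases N.eq_zero_or_pos with rfl | hN
  · simpa using by linarith
  have hN' : (0 : ℝ) < N := mod_cast hN
  rw [abs_le]
  constructor <;> refine le_of_mul_le_mul_left ?_ hN'
  · linarith [mul_log_sub_self_le_log_factorial N, log_factorial_le_mul_sum_vonMangoldt_div N,
      mul_nonneg hN'.le hlog_four]
  · linarith [mul_sum_vonMangoldt_div_sub_psi_le_log_factorial N, log_factorial_le_mul_log N,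
      Chebyshev.psi_le_const_mul_self hN'.le]

lemma exists_tendsto_sum_sub_div_sub_log {u : ℕ → ℝ} {M : ℝ} (hu : Monotone u) (hu₀ : 0 < u 0)
    (hM : ∀ i, u (i + 1) - u i ≤ M) :
    ∃ C, Tendsto (fun n => ∑ i ∈ range n, (u (i + 1) - u i) / u (i + 1) - log (u n))
      atTop (𝓝 C) := by
  set f : ℕ → ℝ := fun n => ∑ i ∈ range n, (u (i + 1) - u i) / u (i + 1) - log (u n)
  have hpos (n : ℕ) : 0 < u n := hu₀.trans_le (hu n.zero_le)
  have hratio (n : ℕ) : 0 < u (n + 1) / u n := div_pos (hpos _) (hpos n)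
  have hlog_div (n : ℕ) : log (u (n + 1) / u n) = log (u (n + 1)) - log (u n) :=
    Real.log_div (hpos _).ne' (hpos n).ne'
  have hf_anti : Antitone f := antitone_nat_of_succ_le fun n => by
    have hsub_div : (u (n + 1) - u n) / u (n + 1) = 1 - (u (n + 1) / u n)⁻¹ := by
      rw [sub_div, div_self (hpos _).ne', inv_div]
    simp only [f, sum_range_succ]
    linarith [Real.one_sub_inv_le_log_of_pos (hratio n), hlog_div n]
  have hf_mono : Monotone fun n => f n - M / u n := monotone_nat_of_le_succ fun n => by
    have hstep : u (n + 1) / u n - 1 - (u (n + 1) - u n) / u (n + 1) ≤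
        M / u n - M / u (n + 1) := by
      have hn := (hpos n).ne'
      have hn' := (hpos (n + 1)).ne'
      calc u (n + 1) / u n - 1 - (u (n + 1) - u n) / u (n + 1)
          = (u (n + 1) - u n) * ((u (n + 1) - u n) / (u n * u (n + 1))) := by
            field_simp
        _ ≤ M * ((u (n + 1) - u n) / (u n * u (n + 1))) :=
            mul_le_mul_of_nonneg_right (hM n) <| div_nonneg (sub_nonneg.mpr (hu n.le_succ))
              (mul_pos (hpos n) (hpos _)).le
        _ = M / u n - M / u (n + 1) := by field_simp
    simp only [f, sum_range_succ]
    linarith [Real.log_le_sub_one_of_pos (hratio n), hlog_div n]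
  have hM_nonneg : 0 ≤ M := (sub_nonneg.mpr (hu (Nat.le_succ 0))).trans (hM 0)
  have hf_bdd : BddBelow (Set.range f) := ⟨f 0 - M / u 0, Set.forall_mem_range.mpr fun n =>
    (hf_mono n.zero_le).trans (sub_le_self _ (div_nonneg hM_nonneg (hpos n).le))⟩
  exact ⟨_, tendsto_atTop_ciInf hf_anti hf_bdd⟩

lemma exists_tendsto_sum_div_sub_log {c u : ℕ → ℝ} {K M : ℝ} (hu : Monotone u) (hu₀ : 0 < u 0)
    (hM : ∀ i, u (i + 1) - u i ≤ M) (hu_top : Tendsto u atTop atTop)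
    (hK : ∀ n, |∑ i ∈ range (n + 1), c i - u n| ≤ K) :
    ∃ C, Tendsto (fun n => ∑ i ∈ range (n + 1), c i / u i - log (u n)) atTop (𝓝 C) := by
  obtain ⟨C₁, hC₁⟩ := exists_tendsto_sum_sub_div_sub_log hu hu₀ hM
  have hinv_anti : Antitone fun n => (u (n + 1))⁻¹ := fun m n hmn =>
    inv_anti₀ (hu₀.trans_le (hu (Nat.zero_le _))) (hu (Nat.succ_le_succ hmn))
  have hinv_zero : Tendsto (fun n => (u (n + 1))⁻¹) atTop (𝓝 0) :=
    (hu_top.comp (tendsto_add_atTop_nat 1)).inv_tendsto_atTop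
  have hbounded (n : ℕ) : ‖∑ i ∈ range n, (c (i + 1) - (u (i + 1) - u i))‖ ≤ K + K := by
    have hsplit : ∑ i ∈ range n, (c (i + 1) - (u (i + 1) - u i)) =
        (∑ i ∈ range (n + 1), c i - u n) - (∑ i ∈ range (0 + 1), c i - u 0) := by
      rw [sum_sub_distrib, sum_range_sub, sum_range_succ', sum_range_one]
      ring
    rw [hsplit]
    exact (norm_sub_le _ _).trans (add_le_add (hK n) (hK 0))
  obtain ⟨C₂, hC₂⟩ := cauchySeq_tendsto_of_complete <|
    hinv_anti.cauchySeq_series_mul_of_tendsto_zero_of_bounded hinv_zero hbounded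
  refine ⟨C₂ + C₁ + c 0 / u 0, ((hC₂.add hC₁).add_const _).congr fun n => ?_⟩
  rw [sum_range_succ', ← add_sub_assoc, ← sum_add_distrib, sub_add_eq_add_sub]
  congr 2
  refine sum_congr rfl fun i _ => ?_
  rw [smul_eq_mul]
  ring

/-- The term of `n` in the series `log (∏ₚ (1 - 1/p)⁻¹) = ∑ₙ Λ n / (n log n)`: it is `1 / (k p ^ k)`
when `n = p ^ k` is a prime power, and `0` otherwise. -/
noncomputable def eulerLogTerm (n : ℕ) : ℝ := Λ n / (n * log n)

lemma eulerLogTerm_nonneg (n : ℕ) : 0 ≤ eulerLogTerm n :=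
  div_nonneg ArithmeticFunction.vonMangoldt_nonneg
    (mul_nonneg n.cast_nonneg (Real.log_natCast_nonneg n))

lemma sum_Ioc_zero_add_two {M : Type*} [AddCommMonoid M] {f : ℕ → M} (hf : f 1 = 0)
    (n : ℕ) : ∑ k ∈ Ioc 0 (n + 2), f k = ∑ i ∈ range (n + 1), f (i + 2) := by
  induction n with
  | zero => simp [sum_Ioc_succ_top, hf]
  | succ n ih => rw [sum_Ioc_succ_top (Nat.zero_le _), ih, sum_range_succ _ (n + 1)]

lemma log_natCast_succ_sub_log_le_one (n : ℕ) : log (n + 1 : ℕ) - log n ≤ 1 := by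
  rcases n.eq_zero_or_pos with rfl | hn
  · simp
  have hn' : (0 : ℝ) < n := mod_cast hn
  rw [← Real.log_div (mod_cast n.succ_ne_zero) hn'.ne', Nat.cast_succ, add_div, div_self hn'.ne']
  calc log (1 + 1 / n) ≤ 1 + 1 / n - 1 := Real.log_le_sub_one_of_pos (by positivity)
    _ = 1 / n := add_sub_cancel_left _ _
    _ ≤ 1 := div_le_one_of_le₀ (mod_cast hn) hn'.le

lemma exists_tendsto_sum_eulerLogTerm_sub_log_log :
    ∃ C, Tendsto (fun N : ℕ => ∑ n ∈ Ioc 0 N, eulerLogTerm n - log (log N)) atTop (𝓝 C) := by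
  have hlog_mono : Monotone fun n : ℕ => log (n + 2 : ℕ) := fun m n hmn =>
    Real.log_le_log (by positivity) (mod_cast Nat.add_le_add_right hmn 2)
  have hlog_top : Tendsto (fun n : ℕ => log (n + 2 : ℕ)) atTop atTop :=
    Real.tendsto_log_atTop.comp
      (tendsto_natCast_atTop_atTop.comp (tendsto_add_atTop_nat 2))
  obtain ⟨C, hC⟩ := exists_tendsto_sum_div_sub_log (c := fun i => Λ (i + 2) / (i + 2 : ℕ))
    hlog_mono (Real.log_pos (by norm_num)) (fun i => log_natCast_succ_sub_log_le_one (i + 2))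
    hlog_top fun n => by
      rw [← sum_Ioc_zero_add_two (f := fun n => Λ n / n) (by simp)]
      exact abs_sum_vonMangoldt_div_sub_log_le (n + 2)
  refine ⟨C, (tendsto_add_atTop_iff_nat 2).mp <| hC.congr fun n => ?_⟩
  rw [sum_Ioc_zero_add_two (by simp [eulerLogTerm])]
  simp only [eulerLogTerm, div_div]

section Abelian

variable {ι : Type*} {a ν : ι → ℝ} {L : ℝ}

/-- The counting function `t ↦ ∑_{ν i ≤ t} a i` of the general Dirichlet series
`s ↦ ∑ i, a i * exp (-s * ν i)`. -/
noncomputable def summatory (a ν : ι → ℝ) (t : ℝ) : ℝ := ∑' i, if ν i ≤ t then a i else 0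

lemma measurable_summatory [Countable ι] : Measurable (summatory a ν) :=
  Measurable.tsum fun _ => Measurable.ite measurableSet_Ici measurable_const measurable_const

-- Rankin's trick: `exp (t - ν i) ≥ 1` wherever `ν i ≤ t`.
lemma norm_ite_le_exp_mul_abs_mul_exp_neg (i : ι) (t : ℝ) :
    ‖if ν i ≤ t then a i else 0‖ ≤ exp t * |a i * exp (-ν i)| := by
  rw [abs_mul, Real.abs_exp]
  split_ifs with hi
  · calc |a i| ≤ |a i| * exp (t - ν i) :=
          le_mul_of_one_le_right (abs_nonneg _) (Real.one_le_exp (sub_nonneg.mpr hi))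
      _ = exp t * (|a i| * exp (-ν i)) := by rw [sub_eq_add_neg, Real.exp_add]; ring
  · rw [norm_zero]
    positivity

lemma summable_summatory (ha : Summable fun i => a i * exp (-ν i)) (t : ℝ) :
    Summable fun i => if ν i ≤ t then a i else 0 :=
  .of_norm_bounded (ha.abs.mul_left (exp t)) (norm_ite_le_exp_mul_abs_mul_exp_neg · t)

lemma abs_summatory_le (ha : Summable fun i => a i * exp (-ν i)) (t : ℝ) :
    |summatory a ν t| ≤ exp t * ∑' i, |a i * exp (-ν i)| := by
  rw [← tsum_mul_left]
  exact tsum_of_norm_bounded (ha.abs.mul_left (exp t)).hasSum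
    (norm_ite_le_exp_mul_abs_mul_exp_neg · t)

lemma exists_forall_abs_summatory_le (ha : Summable fun i => a i * exp (-ν i))
    (hL : Tendsto (summatory a ν) atTop (𝓝 L)) : ∃ M, ∀ t, |summatory a ν t| ≤ M := by
  obtain ⟨T, hT⟩ := eventually_atTop.mp (hL.abs.eventually_le_const (lt_add_one |L|))
  refine ⟨max (|L| + 1) (exp T * ∑' i, |a i * exp (-ν i)|), fun t => ?_⟩
  rcases le_total T t with hTt | htT
  · exact le_max_of_le_left (hT t hTt)
  · refine le_max_of_le_right ((abs_summatory_le ha t).trans ?_)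
    gcongr

lemma ite_mul_exp_neg_eq_indicator {s : ℝ} (hs : 0 < s) (x c : ℝ) :
    (fun u => (if x ≤ u / s then c else 0) * exp (-u)) =
      (Set.Ici (s * x)).indicator fun u => c * exp (-u) := by
  ext u
  simp only [Set.indicator_apply, Set.mem_Ici, le_div_iff₀' hs, ite_mul, zero_mul]

lemma integrableOn_ite_mul_exp_neg {s : ℝ} (hs : 0 < s) (x c : ℝ) :
    IntegrableOn (fun u => (if x ≤ u / s then c else 0) * exp (-u)) (Set.Ioi 0) := by
  rw [ite_mul_exp_neg_eq_indicator hs]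
  exact ((integrableOn_exp_neg_Ioi 0).const_mul c).indicator measurableSet_Ici

lemma integral_ite_mul_exp_neg {s x : ℝ} (hs : 0 < s) (hx : 0 ≤ x) (c : ℝ) :
    ∫ u in Set.Ioi 0, (if x ≤ u / s then c else 0) * exp (-u) = c * exp (-(s * x)) := by
  rw [ite_mul_exp_neg_eq_indicator hs, ← integral_Ici_eq_integral_Ioi,
    setIntegral_indicator measurableSet_Ici, Set.Ici_inter_Ici, sup_of_le_right (by positivity),
    integral_Ici_eq_integral_Ioi, integral_const_mul, integral_exp_neg_Ioi]

lemma integral_summatory_mul_exp_neg [Countable ι] (hν : ∀ i, 0 ≤ ν i) {s : ℝ} (hs : 0 < s)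
    (ha : Summable fun i => a i * exp (-(s * ν i))) :
    ∫ u in Set.Ioi 0, summatory a ν (u / s) * exp (-u) = ∑' i, a i * exp (-(s * ν i)) := by
  have hnorm (i : ι) (u : ℝ) : ‖(if ν i ≤ u / s then a i else 0) * exp (-u)‖ =
      (if ν i ≤ u / s then |a i| else 0) * exp (-u) := by
    rw [norm_mul, Real.norm_of_nonneg (Real.exp_pos _).le, apply_ite norm, norm_zero,
      Real.norm_eq_abs]
  have hintegral := hasSum_integral_of_summable_integral_norm
    (fun i => integrableOn_ite_mul_exp_neg hs (ν i) (a i)) <| by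
      simpa only [hnorm, integral_ite_mul_exp_neg hs (hν _), abs_mul, Real.abs_exp] using ha.abs
  simp only [integral_ite_mul_exp_neg hs (hν _), tsum_mul_right] at hintegral
  exact hintegral.tsum_eq.symm

lemma tendsto_integral_comp_div_mul_exp_neg {F : ℝ → ℝ} {M : ℝ} (hF : Measurable F)
    (hM : ∀ t, |F t| ≤ M) (hL : Tendsto F atTop (𝓝 L)) :
    Tendsto (fun s => ∫ u in Set.Ioi 0, F (u / s) * exp (-u)) (𝓝[>] 0) (𝓝 L) := by
  have hlim : ∫ u in Set.Ioi 0, L * exp (-u) = L := by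
    rw [integral_const_mul, integral_exp_neg_Ioi, neg_zero, Real.exp_zero, mul_one]
  rw [← hlim]
  refine tendsto_integral_filter_of_dominated_convergence (fun u => M * exp (-u)) ?_ ?_
    ((integrableOn_exp_neg_Ioi 0).const_mul M) ?_
  · exact .of_forall fun s => by fun_prop
  · refine .of_forall fun s => .of_forall fun u => ?_
    rw [norm_mul, Real.norm_of_nonneg (Real.exp_pos _).le]
    exact mul_le_mul_of_nonneg_right (hM _) (Real.exp_pos _).le
  · filter_upwards [ae_restrict_mem measurableSet_Ioi] with u hu
    exact (hL.comp (tendsto_inv_nhdsGT_zero.const_mul_atTop hu)).mul_const _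

theorem tendsto_tsum_mul_exp_neg_of_tendsto_summatory [Countable ι] (hν : ∀ i, 0 ≤ ν i)
    (ha : ∀ s > 0, Summable fun i => a i * exp (-(s * ν i)))
    (hL : Tendsto (summatory a ν) atTop (𝓝 L)) :
    Tendsto (fun s => ∑' i, a i * exp (-(s * ν i))) (𝓝[>] 0) (𝓝 L) := by
  obtain ⟨M, hM⟩ := exists_forall_abs_summatory_le (by simpa only [one_mul] using ha 1 one_pos) hL
  refine (tendsto_integral_comp_div_mul_exp_neg measurable_summatory hM hL).congr' ?_
  filter_upwards [self_mem_nhdsWithin] with s hs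
  exact integral_summatory_mul_exp_neg hν hs (ha s hs)

lemma summatory_neg (t : ℝ) : summatory (-a) ν t = -summatory a ν t := by
  rw [summatory, summatory, ← tsum_neg]
  simp only [Pi.neg_apply, neg_ite, neg_zero]

lemma summatory_sumElim {κ : Type*} {b μ : κ → ℝ} (ha : Summable fun i => a i * exp (-ν i))
    (hb : Summable fun j => b j * exp (-μ j)) (t : ℝ) :
    summatory (Sum.elim a b) (Sum.elim ν μ) t = summatory a ν t + summatory b μ t :=
  Summable.tsum_sum (summable_summatory ha t) (summable_summatory hb t)

theorem tendsto_tsum_sub_tsum_of_tendsto_summatory_sub {κ : Type*} [Countable ι] [Countable κ]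
    {b μ : κ → ℝ} (hν : ∀ i, 0 ≤ ν i) (hμ : ∀ j, 0 ≤ μ j)
    (ha : ∀ s > 0, Summable fun i => a i * exp (-(s * ν i)))
    (hb : ∀ s > 0, Summable fun j => b j * exp (-(s * μ j)))
    (hL : Tendsto (fun t => summatory a ν t - summatory b μ t) atTop (𝓝 L)) :
    Tendsto (fun s => ∑' i, a i * exp (-(s * ν i)) - ∑' j, b j * exp (-(s * μ j)))
      (𝓝[>] 0) (𝓝 L) := by
  have hb_neg : ∀ s > 0, Summable fun j => (-b) j * exp (-(s * μ j)) := fun s hs => by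
    simpa only [Pi.neg_apply, neg_mul] using (hb s hs).neg
  have hL_sum : Tendsto (summatory (Sum.elim a (-b)) (Sum.elim ν μ)) atTop (𝓝 L) := by
    refine hL.congr fun t => ?_
    rw [summatory_sumElim (by simpa only [one_mul] using ha 1 one_pos)
      (by simpa only [one_mul] using hb_neg 1 one_pos), summatory_neg, sub_eq_add_neg]
  have hν_sum : ∀ i, 0 ≤ Sum.elim ν μ i := Sum.forall.mpr ⟨hν, hμ⟩
  have ha_sum : ∀ s > 0, Summable fun i => Sum.elim a (-b) i * exp (-(s * Sum.elim ν μ i)) :=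
    fun s hs => .sum _ (ha s hs) (hb_neg s hs)
  refine (tendsto_tsum_mul_exp_neg_of_tendsto_summatory hν_sum ha_sum hL_sum).congr' ?_
  filter_upwards [self_mem_nhdsWithin] with s hs
  refine (Summable.tsum_sum (f := fun i => Sum.elim a (-b) i * exp (-(s * Sum.elim ν μ i)))
    (ha s hs) (hb_neg s hs)).trans ?_
  simp only [Sum.elim_inl, Sum.elim_inr, Pi.neg_apply, neg_mul, tsum_neg, sub_eq_add_neg]

end Abelian

lemma tendsto_log_sub_log_of_isEquivalent {α : Type*} {l : Filter α} {f g : α → ℝ}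
    (h : f ~[l] g) (hg : ∀ᶠ x in l, g x ≠ 0) :
    Tendsto (fun x => log (f x) - log (g x)) l (𝓝 0) := by
  have hratio : Tendsto (f / g) l (𝓝 1) := (isEquivalent_iff_tendsto_one hg).mp h
  have hlog : Tendsto (fun x => log ((f / g) x)) l (𝓝 0) := by
    simpa only [Real.log_one] using hratio.log one_ne_zero
  refine hlog.congr' ?_
  filter_upwards [hg, hratio.eventually_ne one_ne_zero] with x hgx hfgx
  exact Real.log_div (div_ne_zero_iff.mp hfgx).1 hgx

lemma summatory_eq_sum_Ioc {a ν : ℕ → ℝ} {t : ℝ} {N : ℕ} (ha : a 0 = 0)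
    (hN : ∀ n ≠ 0, ν n ≤ t ↔ n ≤ N) : summatory a ν t = ∑ n ∈ Ioc 0 N, a n := by
  rw [summatory, tsum_eq_sum (s := Ioc 0 N)]
  · refine sum_congr rfl fun n hn => if_pos ?_
    exact (hN n (mem_Ioc.mp hn).1.ne').mpr (mem_Ioc.mp hn).2
  · intro n hn
    rcases eq_or_ne n 0 with rfl | hn₀
    · rw [ha, ite_self]
    · exact if_neg fun h => hn (mem_Ioc.mpr ⟨Nat.pos_of_ne_zero hn₀, (hN n hn₀).mp h⟩)

lemma eulerLogTerm_mul_exp_neg (s : ℝ) (n : ℕ) :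
    eulerLogTerm n * exp (-(s * log n)) = Λ n / ((n : ℝ) ^ (1 + s) * log n) := by
  rcases n.eq_zero_or_pos with rfl | hn
  · simp [eulerLogTerm]
  have hn' : (0 : ℝ) < n := mod_cast hn
  rw [eulerLogTerm, Real.rpow_add hn', Real.rpow_one, Real.rpow_def_of_pos hn', Real.exp_neg,
    mul_comm s]
  field_simp

lemma summable_eulerLogTerm_mul_exp_neg {s : ℝ} (hs : 0 < s) :
    Summable fun n => eulerLogTerm n * exp (-(s * log n)) := by
  have hzeta : Summable fun n : ℕ => 1 / (n : ℝ) ^ (1 + s) :=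
    Real.summable_one_div_nat_rpow.mpr (lt_add_of_pos_right 1 hs)
  refine hzeta.of_nonneg_of_le
    (fun n => mul_nonneg (eulerLogTerm_nonneg n) (Real.exp_pos _).le) fun n => ?_
  rw [eulerLogTerm_mul_exp_neg, mul_comm, ← div_div]
  gcongr
  exact div_le_one_of_le₀ ArithmeticFunction.vonMangoldt_le_log (Real.log_natCast_nonneg n)

lemma tsum_eulerLogTerm_mul_exp_neg {s : ℝ} (hs : 0 < s) :
    ∑' n, eulerLogTerm n * exp (-(s * log n)) = log (riemannZeta (1 + s : ℝ)).re := by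
  simp only [log_riemannZeta_eq (lt_add_of_pos_right 1 hs), eulerLogTerm_mul_exp_neg]

lemma hasSum_inv_mul_exp_neg {s : ℝ} (hs : 0 < s) :
    HasSum (fun n : ℕ => (n : ℝ)⁻¹ * exp (-(s * n))) (-log (1 - exp (-s))) := by
  have hexp : |exp (-s)| < 1 := by
    rw [Real.abs_exp, Real.exp_lt_one_iff]
    exact neg_neg_of_pos hs
  have hzero : ∑ n ∈ range 1, (n : ℝ)⁻¹ * exp (-(s * n)) = 0 := by simp
  rw [← hasSum_nat_add_iff' 1, hzero, sub_zero]
  refine (Real.hasSum_pow_div_log_of_abs_lt_one hexp).congr_fun fun n => ?_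
  rw [← Real.exp_nat_mul, div_eq_inv_mul]
  push_cast
  ring_nf

lemma tendsto_log_one_sub_exp_neg_sub_log :
    Tendsto (fun s => log (1 - exp (-s)) - log s) (𝓝[>] 0) (𝓝 0) := by
  have hderiv : HasDerivAt (fun s => 1 - exp (-s)) 1 0 := by
    simpa using ((hasDerivAt_neg (0 : ℝ)).exp).const_sub 1
  have hequiv : (fun s => 1 - exp (-s)) ~[𝓝 0] id := by
    refine hderiv.isLittleO.congr (fun s => ?_) (fun s => sub_zero s)
    simp
  exact tendsto_log_sub_log_of_isEquivalent (hequiv.mono nhdsWithin_le_nhds)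
    (eventually_mem_nhdsWithin.mono fun s hs => ne_of_gt hs)

lemma tendsto_log_riemannZeta_add_log :
    Tendsto (fun s : ℝ => log (riemannZeta (1 + s : ℝ)).re + log s) (𝓝[>] 0) (𝓝 0) := by
  have hshift : Tendsto (fun s : ℝ => 1 + s) (𝓝[>] 0) (𝓝[>] 1) := by
    simpa only [Tendsto, add_zero] using (map_add_left_nhdsGT (c := (1 : ℝ)) (a := 0)).le
  simpa only [Function.comp_def, add_sub_cancel_left] using
    ((isLittleO_one_iff ℝ).mp log_riemannZeta_add_log_sub_isLittleO_ofReal).comp hshift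

lemma tendsto_sum_Ioc_inv_sub_log :
    Tendsto (fun N : ℕ => ∑ n ∈ Ioc 0 N, (n : ℝ)⁻¹ - log N) atTop
      (𝓝 Real.eulerMascheroniConstant) := by
  refine Real.tendsto_harmonic_sub_log.congr fun N => ?_
  rw [harmonic_eq_sum_Icc]
  push_cast
  rfl

lemma tendsto_log_natFloor_sub_log :
    Tendsto (fun x : ℝ => log ⌊x⌋₊ - log x) atTop (𝓝 0) :=
  tendsto_log_sub_log_of_isEquivalent isEquivalent_nat_floor (eventually_ne_atTop 0)

lemma tendsto_log_log_natFloor_sub_log_log :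
    Tendsto (fun x : ℝ => log (log ⌊x⌋₊) - log (log x)) atTop (𝓝 0) :=
  tendsto_log_sub_log_of_isEquivalent (isEquivalent_nat_floor.log tendsto_id)
    (Real.tendsto_log_atTop.eventually_ne_atTop 0)

lemma summatory_eulerLogTerm_log (t : ℝ) :
    summatory eulerLogTerm (fun n => log n) t = ∑ n ∈ Ioc 0 ⌊exp t⌋₊, eulerLogTerm n :=
  summatory_eq_sum_Ioc (by simp [eulerLogTerm]) fun n hn => by
    rw [Real.log_le_iff_le_exp (by positivity), Nat.le_floor_iff (Real.exp_pos t).le]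

lemma summatory_inv_natCast {t : ℝ} (ht : 0 ≤ t) :
    summatory (fun n : ℕ => (n : ℝ)⁻¹) (fun n => n) t = ∑ n ∈ Ioc 0 ⌊t⌋₊, (n : ℝ)⁻¹ :=
  summatory_eq_sum_Ioc (by simp) fun _ _ => (Nat.le_floor_iff ht).symm

lemma tendsto_summatory_sub_summatory {C : ℝ}
    (hC : Tendsto (fun N : ℕ => ∑ n ∈ Ioc 0 N, eulerLogTerm n - log (log N)) atTop (𝓝 C)) :
    Tendsto (fun t => summatory eulerLogTerm (fun n => log n) t -
      summatory (fun n : ℕ => (n : ℝ)⁻¹) (fun n => n) t) atTop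
      (𝓝 (C - Real.eulerMascheroniConstant)) := by
  have heuler : Tendsto (fun t => summatory eulerLogTerm (fun n => log n) t - log t) atTop
      (𝓝 (C + 0)) := by
    refine (((hC.comp tendsto_nat_floor_atTop).add tendsto_log_log_natFloor_sub_log_log).comp
      Real.tendsto_exp_atTop).congr fun t => ?_
    simp only [Function.comp_apply, summatory_eulerLogTerm_log, Real.log_exp, sub_add_sub_cancel]
  have hharmonic : Tendsto (fun t => summatory (fun n : ℕ => (n : ℝ)⁻¹) (fun n => n) t - log t)
      atTop (𝓝 (Real.eulerMascheroniConstant + 0)) := by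
    refine ((tendsto_sum_Ioc_inv_sub_log.comp tendsto_nat_floor_atTop).add
      tendsto_log_natFloor_sub_log).congr' ?_
    filter_upwards [eventually_ge_atTop 0] with t ht
    simp only [Function.comp_apply, summatory_inv_natCast ht, sub_add_sub_cancel]
  simpa only [add_zero, sub_sub_sub_cancel_right] using heuler.sub hharmonic

lemma tendsto_tsum_eulerLogTerm_sub_tsum_inv :
    Tendsto (fun s => ∑' n, eulerLogTerm n * exp (-(s * log n)) -
      ∑' n : ℕ, (n : ℝ)⁻¹ * exp (-(s * n))) (𝓝[>] 0) (𝓝 0) := by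
  have hzero := tendsto_log_riemannZeta_add_log.add tendsto_log_one_sub_exp_neg_sub_log
  rw [add_zero] at hzero
  refine hzero.congr' ?_
  filter_upwards [self_mem_nhdsWithin] with s hs
  rw [tsum_eulerLogTerm_mul_exp_neg hs, (hasSum_inv_mul_exp_neg hs).tsum_eq]
  ring

theorem tendsto_sum_eulerLogTerm_sub_log_log :
    Tendsto (fun N : ℕ => ∑ n ∈ Ioc 0 N, eulerLogTerm n - log (log N)) atTop
      (𝓝 Real.eulerMascheroniConstant) := by
  obtain ⟨C, hC⟩ := exists_tendsto_sum_eulerLogTerm_sub_log_log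
  have hC_sub := tendsto_tsum_sub_tsum_of_tendsto_summatory_sub Real.log_natCast_nonneg
    Nat.cast_nonneg (fun _ => summable_eulerLogTerm_mul_exp_neg)
    (fun _ hs => (hasSum_inv_mul_exp_neg hs).summable) (tendsto_summatory_sub_summatory hC)
  rwa [← sub_eq_zero.mp (tendsto_nhds_unique hC_sub tendsto_tsum_eulerLogTerm_sub_tsum_inv)]

section PrimePowers

variable {p : ℕ}

lemma eulerLogTerm_prime_pow (hp : p.Prime) (k : ℕ) :
    eulerLogTerm (p ^ (k + 1)) = (1 / p : ℝ) ^ (k + 1) / (k + 1) := by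
  have hlog : log p ≠ 0 := (Real.log_pos (mod_cast hp.one_lt)).ne'
  rw [eulerLogTerm, ArithmeticFunction.vonMangoldt_apply_pow k.succ_ne_zero,
    ArithmeticFunction.vonMangoldt_apply_prime hp, Nat.cast_pow, Real.log_pow, one_div_pow]
  push_cast
  field_simp

lemma hasSum_ite_minFac_eq_eulerLogTerm (hp : p.Prime) :
    HasSum (fun n => if n.minFac = p then eulerLogTerm n else 0) (-log (1 - 1 / p)) := by
  have hp_inv : |1 / (p : ℝ)| < 1 := by
    rw [abs_one_div, Nat.abs_cast, div_lt_one (mod_cast hp.pos)]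
    exact mod_cast hp.one_lt
  have hinj : Function.Injective fun k => p ^ (k + 1) :=
    (Nat.pow_right_injective hp.two_le).comp Nat.succ_injective
  refine (hinj.hasSum_iff fun n hn_range => ite_eq_right_iff.mpr fun hn_minFac => ?_).mp <|
    (Real.hasSum_pow_div_log_of_abs_lt_one hp_inv).congr_fun fun k => ?_
  · have h_not : ¬ IsPrimePow n := fun h => by
      obtain ⟨k, -, hk, hnk⟩ := (isPrimePow_nat_iff_bounded_log_minFac n).mp h
      rw [hn_minFac] at hnk
      exact hn_range ⟨k - 1, by simpa only [Nat.sub_add_cancel hk] using hnk.symm⟩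
    rw [eulerLogTerm, ArithmeticFunction.vonMangoldt_eq_zero_iff.mpr h_not, zero_div]
  · rw [Function.comp_apply, if_pos (hp.pow_minFac k.succ_ne_zero), eulerLogTerm_prime_pow hp]

lemma sum_range_succ_eq_sum_Ioc {M : Type*} [AddCommMonoid M] {f : ℕ → M} (hf : f 0 = 0) (N : ℕ) :
    ∑ n ∈ range (N + 1), f n = ∑ n ∈ Ioc 0 N, f n := by
  rw [Nat.range_succ_eq_Icc_zero, ← sum_Ioc_add_eq_sum_Icc N.zero_le, hf, add_zero]

lemma tendsto_sum_Ioc_ite_minFac_eq_eulerLogTerm (hp : p.Prime) :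
    Tendsto (fun N => ∑ n ∈ Ioc 0 N, if n.minFac = p then eulerLogTerm n else 0) atTop
      (𝓝 (-log (1 - 1 / p))) := by
  refine ((hasSum_ite_minFac_eq_eulerLogTerm hp).tendsto_sum_nat.comp
    (tendsto_add_atTop_nat 1)).congr fun N => ?_
  exact sum_range_succ_eq_sum_Ioc (by simp [eulerLogTerm]) N

lemma sum_Ioc_eulerLogTerm_eq_sum_primesLE (N : ℕ) :
    ∑ n ∈ Ioc 0 N, eulerLogTerm n =
      ∑ p ∈ N.primesLE, ∑ n ∈ Ioc 0 N, if n.minFac = p then eulerLogTerm n else 0 := by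
  rw [sum_comm]
  refine sum_congr rfl fun n hn => ?_
  obtain ⟨hn_pos, hnN⟩ := mem_Ioc.mp hn
  rw [sum_ite_eq]
  rcases eq_or_ne n 1 with rfl | hn_one
  · simp [eulerLogTerm]
  · rw [if_pos (Nat.mem_primesLE.mpr
      ⟨(Nat.minFac_le hn_pos).trans hnN, Nat.minFac_prime hn_one⟩)]

lemma neg_log_one_sub_sub_self_le {x : ℝ} (hx : x ≤ 1 / 2) : -log (1 - x) - x ≤ 2 * x ^ 2 := by
  have hpos : 0 < 1 - x := by linarith
  have hinv : (1 - x)⁻¹ ≤ 1 + x + 2 * x ^ 2 := by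
    rw [inv_le_iff_one_le_mul₀ hpos]
    linarith [mul_nonneg (sq_nonneg x) (sub_nonneg.mpr hx)]
  linarith [Real.one_sub_inv_le_log_of_pos hpos]

lemma one_div_le_sum_Ioc_ite_minFac_eq_eulerLogTerm (hp : p.Prime) {N : ℕ} (hpN : p ≤ N) :
    1 / p ≤ ∑ n ∈ Ioc 0 N, if n.minFac = p then eulerLogTerm n else 0 := by
  have hterm : (1 / p : ℝ) = if p.minFac = p then eulerLogTerm p else 0 := by
    rw [if_pos hp.minFac_eq]
    simpa using (eulerLogTerm_prime_pow hp 0).symm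
  rw [hterm]
  refine single_le_sum (f := fun n => if n.minFac = p then eulerLogTerm n else 0)
    (fun n _ => ite_nonneg (eulerLogTerm_nonneg n) le_rfl) (mem_Ioc.mpr ⟨hp.pos, hpN⟩)

/-- The part of the Euler factor logarithm `-log (1 - 1 / p)` carried by the powers of `p` exceeding
`N`. For `p` prime these are the prime powers `n` with `n.minFac = p`. -/
noncomputable def eulerLogTail (p N : ℕ) : ℝ :=
  -log (1 - 1 / p) - ∑ n ∈ Ioc 0 N, if n.minFac = p then eulerLogTerm n else 0

lemma eulerLogTail_nonneg (hp : p.Prime) (N : ℕ) : 0 ≤ eulerLogTail p N :=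
  sub_nonneg.mpr <| sum_le_hasSum _ (fun n _ => ite_nonneg (eulerLogTerm_nonneg n) le_rfl)
    (hasSum_ite_minFac_eq_eulerLogTerm hp)

lemma eulerLogTail_le (hp : p.Prime) {N : ℕ} (hpN : p ≤ N) :
    eulerLogTail p N ≤ 2 * (1 / p : ℝ) ^ 2 := by
  have hp_inv : (1 / p : ℝ) ≤ 1 / 2 := one_div_le_one_div_of_le two_pos (mod_cast hp.two_le)
  exact (sub_le_sub_left (one_div_le_sum_Ioc_ite_minFac_eq_eulerLogTerm hp hpN) _).trans
    (neg_log_one_sub_sub_self_le hp_inv)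

lemma tendsto_eulerLogTail (hp : p.Prime) : Tendsto (eulerLogTail p) atTop (𝓝 0) := by
  rw [← sub_self (-log (1 - 1 / p : ℝ))]
  exact (tendsto_sum_Ioc_ite_minFac_eq_eulerLogTerm hp).const_sub _

lemma tendsto_sum_primesLE_eulerLogTail :
    Tendsto (fun N => ∑ p ∈ N.primesLE, eulerLogTail p N) atTop (𝓝 0) := by
  have htsum (N : ℕ) : ∑' p, (if p ∈ N.primesLE then eulerLogTail p N else 0) =
      ∑ p ∈ N.primesLE, eulerLogTail p N := by
    rw [tsum_eq_sum fun p hp => if_neg hp]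
    exact sum_congr rfl fun p hp => if_pos hp
  have hbound : Summable fun p : ℕ => 2 * (1 / p : ℝ) ^ 2 := by
    simpa only [one_div_pow] using (Real.summable_one_div_nat_pow.mpr one_lt_two).mul_left 2
  rw [← tsum_zero (β := ℕ)]
  refine (tendsto_tsum_of_dominated_convergence hbound (fun p => ?_) ?_).congr htsum
  · by_cases hp : p.Prime
    · refine (tendsto_eulerLogTail hp).congr' ?_
      filter_upwards [eventually_ge_atTop p] with N hpN
      rw [if_pos (Nat.mem_primesLE.mpr ⟨hpN, hp⟩)]
    · exact tendsto_const_nhds.congr fun N => (if_neg fun h => hp (Nat.mem_primesLE.mp h).2).symm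
  · refine .of_forall fun N p => ?_
    split_ifs with h
    · obtain ⟨hpN, hp⟩ := Nat.mem_primesLE.mp h
      rw [Real.norm_of_nonneg (eulerLogTail_nonneg hp N)]
      exact eulerLogTail_le hp hpN
    · rw [norm_zero]
      positivity

lemma tendsto_sum_primesLE_neg_log_sub_sum_eulerLogTerm :
    Tendsto (fun N : ℕ => (∑ p ∈ N.primesLE, -log (1 - 1 / p : ℝ)) - ∑ n ∈ Ioc 0 N, eulerLogTerm n)
      atTop (𝓝 0) := by
  refine tendsto_sum_primesLE_eulerLogTail.congr fun N => ?_
  simp only [eulerLogTail]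
  rw [sum_sub_distrib, sum_Ioc_eulerLogTerm_eq_sum_primesLE]

end PrimePowers

theorem tendsto_sum_primesLE_neg_log_sub_log_log :
    Tendsto (fun x : ℝ => (∑ p ∈ ⌊x⌋₊.primesLE, -log (1 - 1 / p : ℝ)) - log (log x)) atTop
      (𝓝 Real.eulerMascheroniConstant) := by
  have hnat := (tendsto_sum_primesLE_neg_log_sub_sum_eulerLogTerm.add
    tendsto_sum_eulerLogTerm_sub_log_log).comp (tendsto_nat_floor_atTop (α := ℝ))
  simpa only [Function.comp_apply, sub_add_sub_cancel, zero_add, add_zero] using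
    hnat.add tendsto_log_log_natFloor_sub_log_log

lemma prod_primesLE_one_sub_one_div (N : ℕ) :
    ∏ p ∈ N.primesLE, (1 - 1 / p : ℝ) = exp (-∑ p ∈ N.primesLE, -log (1 - 1 / p : ℝ)) := by
  rw [sum_neg_distrib, neg_neg, Real.exp_sum]
  refine prod_congr rfl fun p hp => (Real.exp_log (sub_pos.mpr ?_)).symm
  have hp_one : 1 < (p : ℝ) := mod_cast (Nat.mem_primesLE.mp hp).2.one_lt
  exact (div_lt_one (one_pos.trans hp_one)).mpr hp_one

end

theorem stmt_16 (γ : ℝ)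
    (hγ : Tendsto (fun N : ℕ => (∑ n ∈ Finset.Icc 1 N, (1 : ℝ) / n) - Real.log N)
      atTop (nhds γ)) :
    Tendsto
      (fun x : ℝ =>
        (∏ p ∈ (Finset.Icc 1 ⌊x⌋₊).filter Nat.Prime, (1 - 1 / (p : ℝ))) /
          (Real.exp (-γ) / Real.log x))
      atTop (nhds 1) := by
  have hγ_eq : γ = Real.eulerMascheroniConstant := by
    refine tendsto_nhds_unique hγ (tendsto_sum_Ioc_inv_sub_log.congr fun N => ?_)
    simp only [one_div]
    rfl
  have hexp := (tendsto_sum_primesLE_neg_log_sub_log_log.const_sub γ).rexp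
  rw [← hγ_eq, sub_self, Real.exp_zero] at hexp
  refine hexp.congr' ?_
  filter_upwards [eventually_gt_atTop 1] with x hx
  rw [← Nat.primesLE_eq_filter_Icc_one, prod_primesLE_one_sub_one_div, div_div_eq_mul_div,
    eq_div_iff (Real.exp_pos _).ne']
  nth_rewrite 2 [← Real.exp_log (Real.log_pos hx)]
  rw [← Real.exp_add, ← Real.exp_add]
  congr 1
  ring
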